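/- arXiv:1707.00970 — 2 statements merged into one kernel-verified Lean document; each statement's English description precedes it below -/
import Mathlib

section
/- Let (a,B_a) be a NIS-Lie superalgebra over a field K of characteristic 2 with B_a even. Let D and D' be odd derivations with elements a_0, a_0' ∈ a_0, each pair satisfying B_a(D(u),v) = B_a(u,D(v)) for all u,v, D² = ad_{a_0}, D(a_0) = 0 (and similarly for D', a_0'). If D and D' are cohomologous, i.e. D = λD' + ad_t for some nonzero λ ∈ K and odd t ∈ a_1, with a_0 = λ²a_0' + s_a(t) + λD'(t), then the D_od-extensions of (a,B_a) by (D,a_0) and by (D',a_0') are isometric via an adapted isometry. -/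
/-!
Common definitions: Lie superalgebras in characteristic 2 (encoded by their even
part `g0`, odd part `g1`, bracket components and squaring), NIS forms (even and odd),
homogeneous derivations, isometries, ideals, irreducibility, and the structure
formulas of the various double extensions.
-/

namespace Char2DoubleExt

section Defs

variable (K : Type) [Field K]
variable (g0 g1 h0 h1 : Type)
variable [AddCommGroup g0] [Module K g0] [AddCommGroup g1] [Module K g1]
variable [AddCommGroup h0] [Module K h0] [AddCommGroup h1] [Module K h1]

/-- A Lie superalgebra over a field of characteristic 2: `g0` is the even part,
`g1` the odd part, `br0` the bracket on `g0`, `br1` the action of `g0` on `g1`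
(the mixed bracket, extended symmetrically), `br11` the bracket of two odd
elements, and `sq` the squaring, whose polarization is `br11`. -/
structure SuperAlg : Type where
  br0 : g0 →ₗ[K] g0 →ₗ[K] g0
  br1 : g0 →ₗ[K] g1 →ₗ[K] g1
  br11 : g1 →ₗ[K] g1 →ₗ[K] g0
  sq : g1 → g0
  sq_smul : ∀ (c : K) (f : g1), sq (c • f) = (c * c) • sq f
  sq_add : ∀ f g : g1, sq (f + g) = sq f + sq g + br11 f g
  br0_self : ∀ x : g0, br0 x x = 0
  br11_comm : ∀ f g : g1, br11 f g = br11 g f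
  jacobi0 : ∀ x y z : g0, br0 x (br0 y z) + br0 y (br0 z x) + br0 z (br0 x y) = 0
  act_br : ∀ (x y : g0) (f : g1), br1 (br0 x y) f = br1 x (br1 y f) + br1 y (br1 x f)
  jacobi_mix : ∀ (x : g0) (f g : g1),
    br0 x (br11 f g) + br11 f (br1 x g) + br11 g (br1 x f) = 0
  sq_br0 : ∀ (f : g1) (x : g0), br0 (sq f) x = br11 f (br1 x f)
  sq_br1 : ∀ f g : g1, br1 (sq f) g = br1 (br11 f g) f

/-- A non-degenerate invariant supersymmetric *even* bilinear form on a Lie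
superalgebra in characteristic 2: it pairs `g0` with `g0` (component `B0`) and
`g1` with `g1` (component `B1`); mixed pairings vanish by evenness. -/
structure EvenNIS (S : SuperAlg K g0 g1) : Type where
  B0 : g0 →ₗ[K] g0 →ₗ[K] K
  B1 : g1 →ₗ[K] g1 →ₗ[K] K
  symm0 : ∀ x y, B0 x y = B0 y x
  symm1 : ∀ f g, B1 f g = B1 g f
  alt1 : ∀ f, B1 f f = 0
  nondeg0 : ∀ x, (∀ y, B0 x y = 0) → x = 0
  nondeg1 : ∀ f, (∀ g, B1 f g = 0) → f = 0
  inv0 : ∀ x y z, B0 (S.br0 x y) z = B0 x (S.br0 y z)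
  inv1 : ∀ (x : g0) (f g : g1), B1 (S.br1 x f) g = B0 x (S.br11 f g)
  inv2 : ∀ (f g : g1) (x : g0), B0 (S.br11 f g) x = B1 f (S.br1 x g)

/-- A non-degenerate invariant supersymmetric *odd* bilinear form: it pairs `g0`
with `g1` (component `Bo`); like-parity pairings vanish by oddness, and
`B(f,f) = 0` for odd `f` is automatic. -/
structure OddNIS (S : SuperAlg K g0 g1) : Type where
  Bo : g0 →ₗ[K] g1 →ₗ[K] K
  nondeg0 : ∀ x, (∀ f, Bo x f = 0) → x = 0
  nondeg1 : ∀ f, (∀ x, Bo x f = 0) → f = 0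
  inv0 : ∀ (x y : g0) (f : g1), Bo (S.br0 x y) f = Bo x (S.br1 y f)
  inv1 : ∀ (x y : g0) (f : g1), Bo y (S.br1 x f) = Bo x (S.br1 y f)
  inv2 : ∀ f g h : g1, Bo (S.br11 f g) h = Bo (S.br11 g h) f

/-- An even derivation of a Lie superalgebra in characteristic 2. -/
structure EvenDer (S : SuperAlg K g0 g1) : Type where
  D0 : g0 →ₗ[K] g0
  D1 : g1 →ₗ[K] g1
  der0 : ∀ x y, D0 (S.br0 x y) = S.br0 (D0 x) y + S.br0 x (D0 y)
  der1 : ∀ x f, D1 (S.br1 x f) = S.br1 (D0 x) f + S.br1 x (D1 f)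
  der_sq : ∀ f, D0 (S.sq f) = S.br11 (D1 f) f

/-- An odd derivation of a Lie superalgebra in characteristic 2. -/
structure OddDer (S : SuperAlg K g0 g1) : Type where
  D0 : g0 →ₗ[K] g1
  D1 : g1 →ₗ[K] g0
  der0 : ∀ x y, D0 (S.br0 x y) = S.br1 x (D0 y) + S.br1 y (D0 x)
  der1 : ∀ x f, D1 (S.br1 x f) = S.br11 (D0 x) f + S.br0 x (D1 f)
  der_sq : ∀ f, D0 (S.sq f) = S.br1 (D1 f) f

/-- An isometry between Lie superalgebras endowed with even NIS forms: an even
linear bijection preserving brackets, squarings and the bilinear forms. -/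
structure EvenIsometry (S : SuperAlg K g0 g1) (N : EvenNIS K g0 g1 S)
    (S' : SuperAlg K h0 h1) (N' : EvenNIS K h0 h1 S') : Type where
  e0 : g0 ≃ₗ[K] h0
  e1 : g1 ≃ₗ[K] h1
  map_br0 : ∀ x y, e0 (S.br0 x y) = S'.br0 (e0 x) (e0 y)
  map_br1 : ∀ x f, e1 (S.br1 x f) = S'.br1 (e0 x) (e1 f)
  map_br11 : ∀ f g, e0 (S.br11 f g) = S'.br11 (e1 f) (e1 g)
  map_sq : ∀ f, e0 (S.sq f) = S'.sq (e1 f)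
  map_B0 : ∀ x y, N'.B0 (e0 x) (e0 y) = N.B0 x y
  map_B1 : ∀ f g, N'.B1 (e1 f) (e1 g) = N.B1 f g

/-- An isometry between Lie superalgebras endowed with odd NIS forms. -/
structure OddIsometry (S : SuperAlg K g0 g1) (N : OddNIS K g0 g1 S)
    (S' : SuperAlg K h0 h1) (N' : OddNIS K h0 h1 S') : Type where
  e0 : g0 ≃ₗ[K] h0
  e1 : g1 ≃ₗ[K] h1
  map_br0 : ∀ x y, e0 (S.br0 x y) = S'.br0 (e0 x) (e0 y)
  map_br1 : ∀ x f, e1 (S.br1 x f) = S'.br1 (e0 x) (e1 f)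
  map_br11 : ∀ f g, e0 (S.br11 f g) = S'.br11 (e1 f) (e1 g)
  map_sq : ∀ f, e0 (S.sq f) = S'.sq (e1 f)
  map_Bo : ∀ x f, N'.Bo (e0 x) (e1 f) = N.Bo x f

/-- A (graded) ideal of a Lie superalgebra in characteristic 2, given by its
even part `I0` and odd part `I1`. -/
def IsIdealPair (S : SuperAlg K g0 g1) (I0 : Submodule K g0) (I1 : Submodule K g1) : Prop :=
  (∀ x ∈ I0, ∀ y, S.br0 x y ∈ I0) ∧ (∀ x ∈ I0, ∀ f, S.br1 x f ∈ I1) ∧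
  (∀ f ∈ I1, ∀ x : g0, S.br1 x f ∈ I1) ∧ (∀ f ∈ I1, ∀ g, S.br11 f g ∈ I0) ∧
  (∀ f ∈ I1, S.sq f ∈ I0)

/-- Irreducibility of a NIS-Lie superalgebra with an even form: it is not the
direct sum of two nonzero mutually orthogonal ideals. -/
def EvenIrreducible (S : SuperAlg K g0 g1) (N : EvenNIS K g0 g1 S) : Prop :=
  ¬ ∃ (I0 J0 : Submodule K g0) (I1 J1 : Submodule K g1),
      IsIdealPair K g0 g1 S I0 I1 ∧ IsIdealPair K g0 g1 S J0 J1 ∧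
      (I0 ≠ ⊥ ∨ I1 ≠ ⊥) ∧ (J0 ≠ ⊥ ∨ J1 ≠ ⊥) ∧
      I0 ⊓ J0 = ⊥ ∧ I0 ⊔ J0 = ⊤ ∧ I1 ⊓ J1 = ⊥ ∧ I1 ⊔ J1 = ⊤ ∧
      (∀ x ∈ I0, ∀ y ∈ J0, N.B0 x y = 0) ∧ (∀ f ∈ I1, ∀ g ∈ J1, N.B1 f g = 0)

/-- Irreducibility of a NIS-Lie superalgebra with an odd form. -/
def OddIrreducible (S : SuperAlg K g0 g1) (N : OddNIS K g0 g1 S) : Prop :=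
  ¬ ∃ (I0 J0 : Submodule K g0) (I1 J1 : Submodule K g1),
      IsIdealPair K g0 g1 S I0 I1 ∧ IsIdealPair K g0 g1 S J0 J1 ∧
      (I0 ≠ ⊥ ∨ I1 ≠ ⊥) ∧ (J0 ≠ ⊥ ∨ J1 ≠ ⊥) ∧
      I0 ⊓ J0 = ⊥ ∧ I0 ⊔ J0 = ⊤ ∧ I1 ⊓ J1 = ⊥ ∧ I1 ⊔ J1 = ⊤ ∧
      (∀ x ∈ I0, ∀ g ∈ J1, N.Bo x g = 0) ∧ (∀ y ∈ J0, ∀ f ∈ I1, N.Bo y f = 0)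

/-- An ideal of a Lie superalgebra given as a pair of subsets (closed under the
vector space operations, brackets with arbitrary elements, and the squaring). -/
def IsIdealSet (S : SuperAlg K g0 g1) (I0 : Set g0) (I1 : Set g1) : Prop :=
  ((0 : g0) ∈ I0) ∧ (∀ x y, x ∈ I0 → y ∈ I0 → x + y ∈ I0) ∧
  (∀ (c : K) x, x ∈ I0 → c • x ∈ I0) ∧
  ((0 : g1) ∈ I1) ∧ (∀ f g, f ∈ I1 → g ∈ I1 → f + g ∈ I1) ∧
  (∀ (c : K) f, f ∈ I1 → c • f ∈ I1) ∧
  (∀ x ∈ I0, ∀ y, S.br0 x y ∈ I0) ∧ (∀ x ∈ I0, ∀ f, S.br1 x f ∈ I1) ∧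
  (∀ f ∈ I1, ∀ x : g0, S.br1 x f ∈ I1) ∧ (∀ f ∈ I1, ∀ g, S.br11 f g ∈ I0) ∧
  (∀ f ∈ I1, S.sq f ∈ I0)

/-- The even part of the center of a Lie superalgebra. -/
def zEven (S : SuperAlg K g0 g1) : Submodule K g0 :=
  (⨅ y : g0, LinearMap.ker (S.br0.flip y)) ⊓ (⨅ f : g1, LinearMap.ker (S.br1.flip f))

/-- The odd part of the center of a Lie superalgebra. -/
def zOdd (S : SuperAlg K g0 g1) : Submodule K g1 :=
  (⨅ x : g0, LinearMap.ker (S.br1 x)) ⊓ (⨅ g : g1, LinearMap.ker (S.br11.flip g))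

/-- The compatibility conditions between an even NIS `N`, an even derivation `D`
and a quadratic form `al` on the odd part, entering the `D_ev`-extension (even
form case): `B(Du,v)+B(u,Dv)=0`, `B(Du,u)=0` for even `u`, `al` is quadratic and
its polar form is `B(·,D·)`. -/
def DevDataEven (S : SuperAlg K g0 g1) (N : EvenNIS K g0 g1 S)
    (D : EvenDer K g0 g1 S) (al : g1 → K) : Prop :=
  (∀ x y : g0, N.B0 (D.D0 x) y + N.B0 x (D.D0 y) = 0) ∧
  (∀ f g : g1, N.B1 (D.D1 f) g + N.B1 f (D.D1 g) = 0) ∧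
  (∀ x : g0, N.B0 (D.D0 x) x = 0) ∧
  (∀ (c : K) (f : g1), al (c • f) = c * c * al f) ∧
  (∀ f g : g1, N.B1 f (D.D1 g) = al (f + g) - al f - al g)

/-- The structure constants of the `D_ev`-extension `g = Kx ⊕ a ⊕ Kx*` (even
form, even `x`, `x*`); an element of the even part is written `(r, u, s)` for
`r x + u + s x*`, and the constant `c` is the (arbitrary) value `B_g(x*,x*)`. -/
def DevExtEvenFormulas (S : SuperAlg K g0 g1) (N : EvenNIS K g0 g1 S)
    (D : EvenDer K g0 g1 S) (al : g1 → K) (c : K)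
    (T : SuperAlg K (K × g0 × K) g1) (M : EvenNIS K (K × g0 × K) g1 T) : Prop :=
  (∀ (r s r' s' : K) (u u' : g0),
      T.br0 (r, u, s) (r', u', s')
        = (N.B0 (D.D0 u) u', S.br0 u u' + s • D.D0 u' + s' • D.D0 u, 0)) ∧
  (∀ (r s : K) (u : g0) (f : g1), T.br1 (r, u, s) f = S.br1 u f + s • D.D1 f) ∧
  (∀ f : g1, T.sq f = (al f, S.sq f, 0)) ∧
  (∀ (r s r' s' : K) (u u' : g0),
      M.B0 (r, u, s) (r', u', s') = N.B0 u u' + r * s' + r' * s + c * (s * s')) ∧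
  (∀ f g : g1, M.B1 f g = N.B1 f g)

/-- The compatibility conditions between an even NIS `N`, an odd derivation `D`
and an even element `w = a₀`, entering the `D_od`-extension (even form case):
`B(Du,v) = B(u,Dv)`, `D² = ad_w`, `D(w) = 0`. -/
def DodDataEven (S : SuperAlg K g0 g1) (N : EvenNIS K g0 g1 S)
    (D : OddDer K g0 g1 S) (w : g0) : Prop :=
  (∀ (x : g0) (f : g1), N.B1 (D.D0 x) f = N.B0 x (D.D1 f)) ∧
  (∀ x : g0, D.D1 (D.D0 x) = S.br0 w x) ∧
  (∀ f : g1, D.D0 (D.D1 f) = S.br1 w f) ∧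
  D.D0 w = 0

/-- The structure constants of the `D_od`-extension `g = Kx ⊕ a ⊕ Kx*` (even
form, odd `x`, `x*`); an element of the odd part is written `(r, u, t)` for
`r x + u + t x*`. -/
def DodExtEvenFormulas (S : SuperAlg K g0 g1) (N : EvenNIS K g0 g1 S)
    (D : OddDer K g0 g1 S) (w : g0)
    (T : SuperAlg K g0 (K × g1 × K)) (M : EvenNIS K g0 (K × g1 × K) T) : Prop :=
  (∀ x y : g0, T.br0 x y = S.br0 x y) ∧
  (∀ (x : g0) (r t : K) (u : g1),
      T.br1 x (r, u, t) = (N.B1 (D.D0 x) u, S.br1 x u + t • D.D0 x, 0)) ∧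
  (∀ (r t : K) (u : g1), T.sq (r, u, t) = S.sq u + (t * t) • w + t • D.D1 u) ∧
  (∀ x y : g0, M.B0 x y = N.B0 x y) ∧
  (∀ (r t r' t' : K) (u u' : g1),
      M.B1 (r, u, t) (r', u', t') = N.B1 u u' + r * t' + r' * t)

/-- The compatibility conditions between an odd NIS `No`, an odd derivation `D`,
an even element `w = a₀` and a quadratic form `al`, entering the
`D_od`-extension (odd form case). -/
def DodDataOdd (S : SuperAlg K g0 g1) (No : OddNIS K g0 g1 S)
    (D : OddDer K g0 g1 S) (w : g0) (al : g1 → K) : Prop :=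
  (∀ x y : g0, No.Bo y (D.D0 x) + No.Bo x (D.D0 y) = 0) ∧
  (∀ f g : g1, No.Bo (D.D1 f) g + No.Bo (D.D1 g) f = 0) ∧
  (∀ x : g0, No.Bo x (D.D0 x) = 0) ∧
  (∀ x : g0, D.D1 (D.D0 x) = S.br0 w x) ∧
  (∀ f : g1, D.D0 (D.D1 f) = S.br1 w f) ∧
  D.D0 w = 0 ∧
  (∀ (c : K) (f : g1), al (c • f) = c * c * al f) ∧
  (∀ f g : g1, al (f + g) - al f - al g = No.Bo (D.D1 f) g)

/-- The structure constants of the `D_od`-extension `g = Kx ⊕ a ⊕ Ke` (odd form,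
even `x`, odd `e`); an even element is written `(r, u)` for `r x + u`, an odd
element `(v, μ)` for `v + μ e`. -/
def DodExtOddFormulas (S : SuperAlg K g0 g1) (No : OddNIS K g0 g1 S)
    (D : OddDer K g0 g1 S) (w : g0) (al : g1 → K) (m : K)
    (T : SuperAlg K (K × g0) (g1 × K)) (M : OddNIS K (K × g0) (g1 × K) T) : Prop :=
  (∀ (r r' : K) (x y : g0), T.br0 (r, x) (r', y) = (No.Bo y (D.D0 x), S.br0 x y)) ∧
  (∀ (r μ : K) (x : g0) (v : g1), T.br1 (r, x) (v, μ) = (S.br1 x v + μ • D.D0 x, 0)) ∧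
  (∀ (μ : K) (v : g1),
      T.sq (v, μ) = (μ * μ * m + al v, S.sq v + (μ * μ) • w + μ • D.D1 v)) ∧
  (∀ (r μ : K) (x : g0) (v : g1), M.Bo (r, x) (v, μ) = No.Bo x v + r * μ)

/-- The compatibility condition between an odd NIS `No` and an even derivation
`D`, entering the `D_ev`-extension (odd form case): `B(Du,v)+B(u,Dv)=0`. -/
def DevDataOdd (S : SuperAlg K g0 g1) (No : OddNIS K g0 g1 S)
    (D : EvenDer K g0 g1 S) : Prop :=
  ∀ (x : g0) (v : g1), No.Bo (D.D0 x) v + No.Bo x (D.D1 v) = 0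

/-- The structure constants of the `D_ev`-extension `g = Kx ⊕ a ⊕ Ke` (odd form,
odd `x`, even `e`); an even element is written `(u, ν)` for `u + ν e`, an odd
element `(μ, v)` for `μ x + v`. -/
def DevExtOddFormulas (S : SuperAlg K g0 g1) (No : OddNIS K g0 g1 S)
    (D : EvenDer K g0 g1 S)
    (T : SuperAlg K (g0 × K) (K × g1)) (M : OddNIS K (g0 × K) (K × g1) T) : Prop :=
  (∀ (ν ν' : K) (x y : g0),
      T.br0 (x, ν) (y, ν') = (S.br0 x y + ν • D.D0 y + ν' • D.D0 x, 0)) ∧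
  (∀ (ν μ : K) (x : g0) (v : g1),
      T.br1 (x, ν) (μ, v) = (No.Bo (D.D0 x) v, S.br1 x v + ν • D.D1 v)) ∧
  (∀ (μ : K) (v : g1), T.sq (μ, v) = (S.sq v, 0)) ∧
  (∀ (ν μ : K) (x : g0) (v : g1), M.Bo (x, ν) (μ, v) = No.Bo x v + ν * μ)

end Defs

end Char2DoubleExt

namespace Char2DoubleExt

/-!
The isometry is the identity on the even part and `x ↦ λ⁻¹x`, `u ↦ u - λ⁻¹B(t, u)x`, `x* ↦ λx* + t`
on the odd part. It preserves the form in every characteristic, because `t` is isotropic. Expanding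
the square of `u + st` shows that the formula for `a₀` is exactly what makes it preserve the
squaring, hence also the bracket of odd elements, by polarization. For the mixed bracket
`[y, u + sx*]` the issue is the `x`-component: the two contributions of `ad_t`, namely
`B([t, y], u)` and `B(t, [y, u])`, cancel by invariance of `B`; characteristic 2 kills
`B(t, [y, t])` and absorbs the opposite signs of the remaining terms `λs B(D'(y), t)`.
-/

section AdaptedEquiv

variable {R V : Type*} [CommRing R] [AddCommGroup V] [Module R V]

/-- The linear automorphism `x ↦ c⁻¹x`, `u ↦ u - c⁻¹B(t, u)x`, `x* ↦ cx* + t` of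
`Rx ⊕ V ⊕ Rx*`: an Eichler transvection followed by a rescaling of the hyperbolic plane spanned by
`x` and `x*`. The triple `(r, u, s)` stands for `rx + u + sx*`. -/
def adaptedEquiv (B : V →ₗ[R] V →ₗ[R] R) (c : Rˣ) (t : V) :
    (R × V × R) ≃ₗ[R] (R × V × R) where
  toFun p := (↑c⁻¹ * (p.1 - B t p.2.1), p.2.1 + p.2.2 • t, c * p.2.2)
  map_add' p q := by
    ext
    · simp only [Prod.fst_add, Prod.snd_add, map_add]
      ring
    · simp only [Prod.fst_add, Prod.snd_add]
      module
    · exact mul_add _ _ _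
  map_smul' k p := by
    ext
    · simp only [Prod.smul_fst, Prod.smul_snd, map_smul, smul_eq_mul, RingHom.id_apply]
      ring
    · simp only [Prod.smul_fst, Prod.smul_snd, smul_eq_mul, RingHom.id_apply]
      module
    · exact mul_left_comm _ _ _
  invFun p :=
    (c * p.1 + B t (p.2.1 - (↑c⁻¹ * p.2.2) • t), p.2.1 - (↑c⁻¹ * p.2.2) • t, ↑c⁻¹ * p.2.2)
  left_inv p := by ext <;> simp
  right_inv p := by ext <;> simp

lemma adaptedEquiv_apply (B : V →ₗ[R] V →ₗ[R] R) (c : Rˣ) (t : V) (r : R) (u : V) (s : R) :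
    adaptedEquiv B c t (r, u, s) = (↑c⁻¹ * (r - B t u), u + s • t, c * s) :=
  rfl

lemma adaptedEquiv_apply_zero (B : V →ₗ[R] V →ₗ[R] R) (c : Rˣ) (t : V) (r : R) (u : V) :
    adaptedEquiv B c t (r, u, 0) = (↑c⁻¹ * (r - B t u), u, 0) := by
  rw [adaptedEquiv_apply, zero_smul, add_zero, mul_zero]

/-- The orthogonal sum of the form `B` on `V` and the hyperbolic plane `Rx ⊕ Rx*`, in the
coordinates of `adaptedEquiv`. -/
def hyperbolicSum (B : V →ₗ[R] V →ₗ[R] R) (p q : R × V × R) : R :=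
  B p.2.1 q.2.1 + p.1 * q.2.2 + q.1 * p.2.2

lemma hyperbolicSum_adaptedEquiv {B : V →ₗ[R] V →ₗ[R] R} (hB : ∀ u v, B u v = B v u) (c : Rˣ)
    {t : V} (ht : B t t = 0) (p q : R × V × R) :
    hyperbolicSum B (adaptedEquiv B c t p) (adaptedEquiv B c t q) = hyperbolicSum B p q := by
  obtain ⟨r, u, s⟩ := p
  obtain ⟨r', u', s'⟩ := q
  simp only [hyperbolicSum, adaptedEquiv_apply, map_add, map_smul, LinearMap.add_apply,
    LinearMap.smul_apply, smul_eq_mul, ht, hB u t]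
  linear_combination (s' * (r - B t u) + s * (r' - B t u')) * c.inv_mul

end AdaptedEquiv

section Lie

variable {K : Type} [Field K] {a0 a1 b0 b1 : Type}
variable [AddCommGroup a0] [Module K a0] [AddCommGroup a1] [Module K a1]
variable [AddCommGroup b0] [Module K b0] [AddCommGroup b1] [Module K b1]

lemma SuperAlg.br11_eq_polar (S : SuperAlg K a0 a1) (f g : a1) :
    S.br11 f g = S.sq (f + g) - S.sq f - S.sq g := by
  rw [S.sq_add]
  abel

lemma SuperAlg.br11_self [CharP K 2] (S : SuperAlg K a0 a1) (f : a1) : S.br11 f f = 0 :=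
  calc S.br11 f f = S.sq ((2 : K) • f) - S.sq f - S.sq f := by rw [S.br11_eq_polar, two_smul]
    _ = (2 : K) • S.sq f := by rw [S.sq_smul]; module
    _ = 0 := by rw [CharTwo.two_eq_zero, zero_smul]

lemma SuperAlg.map_br11_of_map_sq {S : SuperAlg K a0 a1} {S' : SuperAlg K b0 b1}
    (e0 : a0 →ₗ[K] b0) (e1 : a1 →ₗ[K] b1) (h : ∀ f, e0 (S.sq f) = S'.sq (e1 f)) (f g : a1) :
    e0 (S.br11 f g) = S'.br11 (e1 f) (e1 g) := by
  simp only [SuperAlg.br11_eq_polar, map_sub, h, map_add]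

lemma EvenNIS.B1_br1_comm {S : SuperAlg K a0 a1} (N : EvenNIS K a0 a1 S) (x : a0) (f g : a1) :
    N.B1 f (S.br1 x g) = N.B1 (S.br1 x f) g := by
  rw [← N.inv2, N.symm0, N.inv1]

lemma EvenNIS.B1_br1_self [CharP K 2] {S : SuperAlg K a0 a1} (N : EvenNIS K a0 a1 S) (x : a0)
    (f : a1) : N.B1 f (S.br1 x f) = 0 := by
  rw [← N.inv2, S.br11_self, map_zero, LinearMap.zero_apply]

lemma DodExtEvenFormulas.B1_eq_hyperbolicSum {S : SuperAlg K a0 a1} {N : EvenNIS K a0 a1 S}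
    {D : OddDer K a0 a1 S} {w : a0} {T : SuperAlg K a0 (K × a1 × K)}
    {M : EvenNIS K a0 (K × a1 × K) T} (hT : DodExtEvenFormulas K a0 a1 S N D w T M)
    (f g : K × a1 × K) : M.B1 f g = hyperbolicSum N.B1 f g := by
  obtain ⟨-, -, -, -, hB1⟩ := hT
  exact hB1 f.1 f.2.2 g.1 g.2.2 f.2.1 g.2.1

/-- The pair `(D, w)` is cohomologous to `(D', w')` via the scalar `c` and the odd element `t`:
`D = cD' + ad_t`, split into its two homogeneous components, and `w = c²w' + sq t + cD'(t)`.
The condition `c ≠ 0` is encoded by taking `c` to be a unit. -/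
structure IsCohomologous {S : SuperAlg K a0 a1} (D D' : OddDer K a0 a1 S) (w w' : a0) (c : Kˣ)
    (t : a1) : Prop where
  D0_eq : ∀ x, D.D0 x = (c : K) • D'.D0 x + S.br1 x t
  D1_eq : ∀ f, D.D1 f = (c : K) • D'.D1 f + S.br11 t f
  base_eq : w = (c * c : K) • w' + S.sq t + (c : K) • D'.D1 t

namespace IsCohomologous

variable {S : SuperAlg K a0 a1} {N : EvenNIS K a0 a1 S} {D D' : OddDer K a0 a1 S} {w w' : a0}
  {c : Kˣ} {t : a1}

lemma sq_add_smul (h : IsCohomologous D D' w w' c t) (u : a1) (s : K) :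
    S.sq (u + s • t) + (c * s * (c * s)) • w' + (c * s) • D'.D1 (u + s • t) =
      S.sq u + (s * s) • w + s • D.D1 u := by
  rw [S.sq_add, S.sq_smul, h.D1_eq, h.base_eq, S.br11_comm t u]
  simp only [map_add, map_smul]
  module

lemma br1_add_smul (h : IsCohomologous D D' w w' c t) (x : a0) (u : a1) (s : K) :
    S.br1 x (u + s • t) + (c * s) • D'.D0 x = S.br1 x u + s • D.D0 x := by
  rw [h.D0_eq, map_add, map_smul]
  module

lemma B1_D0_add_smul [CharP K 2] (h : IsCohomologous D D' w w' c t) (x : a0) (u : a1) (s : K) :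
    c * N.B1 (D'.D0 x) (u + s • t) =
      N.B1 (D.D0 x) u - N.B1 t (S.br1 x u + s • D.D0 x) := by
  have ad_t_cancels : N.B1 (D.D0 x) u - N.B1 t (S.br1 x u) = c * N.B1 (D'.D0 x) u := by
    rw [h.D0_eq, N.B1_br1_comm, map_add, map_smul, LinearMap.add_apply, LinearMap.smul_apply,
      smul_eq_mul, add_sub_cancel_right]
  have B1_t_D0 : N.B1 t (D.D0 x) = c * N.B1 (D'.D0 x) t := by
    rw [h.D0_eq, map_add, N.B1_br1_self, add_zero, map_smul, smul_eq_mul, N.symm1]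
  calc c * N.B1 (D'.D0 x) (u + s • t)
      = c * N.B1 (D'.D0 x) u + s * (c * N.B1 (D'.D0 x) t) := by
        rw [map_add, map_smul, smul_eq_mul]; ring
    _ = N.B1 (D.D0 x) u - N.B1 t (S.br1 x u) - s * N.B1 t (D.D0 x) := by
        rw [ad_t_cancels, B1_t_D0, CharTwo.sub_eq_add]
    _ = N.B1 (D.D0 x) u - N.B1 t (S.br1 x u + s • D.D0 x) := by
        rw [map_add, map_smul, smul_eq_mul, sub_sub]

variable {T T' : SuperAlg K a0 (K × a1 × K)} {M : EvenNIS K a0 (K × a1 × K) T}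
  {M' : EvenNIS K a0 (K × a1 × K) T'}

lemma map_sq (h : IsCohomologous D D' w w' c t) (hT : DodExtEvenFormulas K a0 a1 S N D w T M)
    (hT' : DodExtEvenFormulas K a0 a1 S N D' w' T' M') (f : K × a1 × K) :
    T.sq f = T'.sq (adaptedEquiv N.B1 c t f) := by
  obtain ⟨-, -, hsq, -⟩ := hT
  obtain ⟨-, -, hsq', -⟩ := hT'
  obtain ⟨r, u, s⟩ := f
  rw [adaptedEquiv_apply, hsq, hsq', h.sq_add_smul]

lemma map_br1 [CharP K 2] (h : IsCohomologous D D' w w' c t)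
    (hT : DodExtEvenFormulas K a0 a1 S N D w T M)
    (hT' : DodExtEvenFormulas K a0 a1 S N D' w' T' M') (x : a0) (f : K × a1 × K) :
    adaptedEquiv N.B1 c t (T.br1 x f) = T'.br1 x (adaptedEquiv N.B1 c t f) := by
  obtain ⟨-, hbr1, -⟩ := hT
  obtain ⟨-, hbr1', -⟩ := hT'
  obtain ⟨r, u, s⟩ := f
  rw [adaptedEquiv_apply, hbr1, hbr1', adaptedEquiv_apply, h.br1_add_smul, ← h.B1_D0_add_smul,
    c.inv_mul_cancel_left, zero_smul, add_zero, mul_zero]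

/-- The isometry between the `D_od`-extensions by two cohomologous pairs: the identity on the even
part and `adaptedEquiv` on the odd part. -/
def isometry [CharP K 2] (h : IsCohomologous D D' w w' c t)
    (hT : DodExtEvenFormulas K a0 a1 S N D w T M)
    (hT' : DodExtEvenFormulas K a0 a1 S N D' w' T' M') :
    EvenIsometry K a0 (K × a1 × K) a0 (K × a1 × K) T M T' M' where
  e0 := LinearEquiv.refl K a0
  e1 := adaptedEquiv N.B1 c t
  map_br0 x y := (hT.1 x y).trans (hT'.1 x y).symm
  map_br1 := h.map_br1 hT hT'
  map_br11 := SuperAlg.map_br11_of_map_sq LinearMap.id (adaptedEquiv N.B1 c t).toLinearMap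
    (h.map_sq hT hT')
  map_sq := h.map_sq hT hT'
  map_B0 x y := by
    obtain ⟨-, -, -, hB0, -⟩ := hT
    obtain ⟨-, -, -, hB0', -⟩ := hT'
    exact (hB0' x y).trans (hB0 x y).symm
  map_B1 f g := by
    rw [hT.B1_eq_hyperbolicSum, hT'.B1_eq_hyperbolicSum,
      hyperbolicSum_adaptedEquiv N.symm1 c (N.alt1 t)]

end IsCohomologous

theorem stmt9_general [CharP K 2] {S : SuperAlg K a0 a1} {N : EvenNIS K a0 a1 S}
    {D D' : OddDer K a0 a1 S} {w w' : a0} {c : Kˣ} {t : a1} (h : IsCohomologous D D' w w' c t)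
    {T T' : SuperAlg K a0 (K × a1 × K)} {M : EvenNIS K a0 (K × a1 × K) T}
    {M' : EvenNIS K a0 (K × a1 × K) T'} (hT : DodExtEvenFormulas K a0 a1 S N D w T M)
    (hT' : DodExtEvenFormulas K a0 a1 S N D' w' T' M') :
    ∃ π : EvenIsometry K a0 (K × a1 × K) a0 (K × a1 × K) T M T' M',
      ∀ (r : K) (u : a1), ∃ (r' : K) (u' : a1), π.e1 (r, u, 0) = (r', u', 0) :=
  ⟨h.isometry hT hT', fun r u => ⟨_, _, adaptedEquiv_apply_zero N.B1 c t r u⟩⟩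

end Lie

/-- Corollary 3.18 of the paper: two cohomologous odd
derivations `D = λD' + ad_t` (with `λ ≠ 0` and `t ∈ a_1` odd) of a NIS-Lie
superalgebra `(a, B_a)` in characteristic 2 with `B_a` even, with associated
elements `a₀ = λ²a₀' + s_a(t) + λD'(t)`, each pair satisfying the compatibility
conditions of a `D_od`-extension, define isometric `D_od`-extensions, via an
adapted isometry. -/
theorem stmt9 (K : Type) [Field K] [CharP K 2] (a0 a1 : Type)
    [AddCommGroup a0] [Module K a0] [AddCommGroup a1] [Module K a1]
    [FiniteDimensional K a0] [FiniteDimensional K a1]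
    (S : SuperAlg K a0 a1) (N : EvenNIS K a0 a1 S)
    (D D' : OddDer K a0 a1 S) (w w' : a0)
    (hdata : DodDataEven K a0 a1 S N D w)
    (hdata' : DodDataEven K a0 a1 S N D' w')
    (lam : K) (hlam : lam ≠ 0) (t : a1)
    (hcoh0 : ∀ x : a0, D.D0 x = lam • D'.D0 x + S.br1 x t)
    (hcoh1 : ∀ f : a1, D.D1 f = lam • D'.D1 f + S.br11 t f)
    (hw : w = (lam * lam) • w' + S.sq t + lam • D'.D1 t)
    (T : SuperAlg K a0 (K × a1 × K)) (M : EvenNIS K a0 (K × a1 × K) T)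
    (hT : DodExtEvenFormulas K a0 a1 S N D w T M)
    (T' : SuperAlg K a0 (K × a1 × K)) (M' : EvenNIS K a0 (K × a1 × K) T')
    (hT' : DodExtEvenFormulas K a0 a1 S N D' w' T' M') :
    ∃ π : EvenIsometry K a0 (K × a1 × K) a0 (K × a1 × K) T M T' M',
      ∀ (r : K) (u : a1), ∃ (r' : K) (u' : a1), π.e1 (r, u, 0) = (r', u', 0) := by
  exact stmt9_general (c := Units.mk0 lam hlam) ⟨hcoh0, hcoh1, hw⟩ hT hT'

end Char2DoubleExt
end

section
/- Let (a,B_a) be a NIS-Lie superalgebra over a field K of characteristic 2 with B_a odd, and let D be an even derivation of a satisfying B_a(D(u),v) + B_a(u,D(v)) = 0 for all u,v ∈ a. Then on g := Kx ⊕ a ⊕ Ke with x odd and e even, the squaring s_g(u + μx) := s_a(u) for u + μx ∈ g_1, together with the bracket [x,g]_g := 0, [u,v]_g := B_a(D(u),v)x + [u,v]_a for u,v ∈ a, and [u,e]_g := D(u), defines a Lie superalgebra structure on g; moreover the bilinear form B_g determined by B_g|_{a×a} = B_a, B_g(a,x) = B_g(a,e) = 0, B_g(x,e) = 1, B_g(x,x)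 = B_g(e,e) = 0 is odd, non-degenerate, symmetric and invariant, so that (g,B_g) is a NIS-Lie superalgebra (the D_ev-extension of (a,B_a) by means of D). -/
namespace Char2DoubleExt

/-!
The extension is built in two steps. First `e` is adjoined so as to act on `a` by `D`, which gives
the semidirect product `a ⋊ Ke`. Then `x` is adjoined as a central odd element; the bracket
`[u, v] = B(D u, v) x + [u, v]` satisfies the Jacobi identities exactly when
`(u + ν e, v) ↦ B(D u, v)` is a 2-cocycle of `a ⋊ Ke`. Since `D` is self-adjoint for `B` in
characteristic 2, this follows from the derivation rule and the invariance of `B`. The form on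
`Kx ⊕ a ⊕ Ke` is the orthogonal sum of `B` and the pairing of `x` with `e`.
-/

section Extension

variable {K g0 g1 : Type} [Field K] [AddCommGroup g0] [Module K g0] [AddCommGroup g1] [Module K g1]
  {S : SuperAlg K g0 g1}

theorem SuperAlg.br0_comm [CharP K 2] (S : SuperAlg K g0 g1) (x y : g0) :
    S.br0 x y = S.br0 y x := by
  have two_eq_zero : (2 : K) = 0 := CharTwo.two_eq_zero
  have polarized := S.br0_self (x + y)
  simp only [map_add, LinearMap.add_apply, S.br0_self] at polarized
  linear_combination (norm := module) polarized - two_eq_zero • S.br0 y x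

namespace EvenDer

theorem map_br11 (D : EvenDer K g0 g1 S) (f g : g1) :
    D.D0 (S.br11 f g) = S.br11 (D.D1 f) g + S.br11 f (D.D1 g) := by
  have polarized := D.der_sq (f + g)
  simp only [S.sq_add, map_add, LinearMap.add_apply, D.der_sq, S.br11_comm (D.D1 g) f] at polarized
  linear_combination (norm := module) polarized

/-- The even-even bracket of the semidirect product `g ⋊ Ke` in which `e` acts by `D`; the pair
`(x, ν)` stands for `x + ν e`. -/
def semidirectBr0 (D : EvenDer K g0 g1 S) : g0 × K →ₗ[K] g0 × K →ₗ[K] g0 × K :=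
  (LinearMap.mk₂ K (fun p q ↦ S.br0 p.1 q.1 + p.2 • D.D0 q.1 + q.2 • D.D0 p.1)
    (fun _ _ _ ↦ by simp only [Prod.fst_add, Prod.snd_add, map_add, LinearMap.add_apply]; module)
    (fun _ _ _ ↦ by
      simp only [Prod.smul_fst, Prod.smul_snd, map_smul, LinearMap.smul_apply]; module)
    (fun _ _ _ ↦ by simp only [Prod.fst_add, Prod.snd_add, map_add]; module)
    (fun _ _ _ ↦ by simp only [Prod.smul_fst, Prod.smul_snd, map_smul]; module)).compr₂
    (LinearMap.inl K g0 K)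

@[simp]
theorem semidirectBr0_apply (D : EvenDer K g0 g1 S) (x y : g0) (ν ν' : K) :
    D.semidirectBr0 (x, ν) (y, ν') = (S.br0 x y + ν • D.D0 y + ν' • D.D0 x, 0) :=
  rfl

/-- The action of the even part of the semidirect product `g ⋊ Ke` on its odd part, which is that
of `g`. -/
def semidirectBr1 (D : EvenDer K g0 g1 S) : g0 × K →ₗ[K] g1 →ₗ[K] g1 :=
  S.br1.coprod (LinearMap.toSpanSingleton K (g1 →ₗ[K] g1) D.D1)

@[simp]
theorem semidirectBr1_apply (D : EvenDer K g0 g1 S) (x : g0) (ν : K) (f : g1) :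
    D.semidirectBr1 (x, ν) f = S.br1 x f + ν • D.D1 f :=
  rfl

section CharTwo

variable [CharP K 2]

theorem semidirectBr0_self (D : EvenDer K g0 g1 S) (p : g0 × K) : D.semidirectBr0 p p = 0 := by
  obtain ⟨x, ν⟩ := p
  have two_eq_zero : (2 : K) = 0 := CharTwo.two_eq_zero
  simp only [semidirectBr0_apply, S.br0_self, Prod.mk_eq_zero, and_true]
  linear_combination (norm := module) two_eq_zero • ν • D.D0 x

theorem semidirectBr0_jacobi (D : EvenDer K g0 g1 S) (p q r : g0 × K) :
    D.semidirectBr0 p (D.semidirectBr0 q r) + D.semidirectBr0 q (D.semidirectBr0 r p)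
      + D.semidirectBr0 r (D.semidirectBr0 p q) = 0 := by
  obtain ⟨x, a⟩ := p
  obtain ⟨y, b⟩ := q
  obtain ⟨z, c⟩ := r
  have two_eq_zero : (2 : K) = 0 := CharTwo.two_eq_zero
  simp only [semidirectBr0_apply, map_add, map_smul, D.der0, Prod.mk_add_mk, Prod.mk_eq_zero,
    zero_smul, add_zero, and_true, S.br0_comm (D.D0 y) z, S.br0_comm (D.D0 z) x,
    S.br0_comm (D.D0 x) y]
  linear_combination (norm := module) S.jacobi0 x y z + two_eq_zero •
    (a • (S.br0 y (D.D0 z) + S.br0 z (D.D0 y) + b • D.D0 (D.D0 z))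
      + b • (S.br0 z (D.D0 x) + S.br0 x (D.D0 z) + c • D.D0 (D.D0 x))
      + c • (S.br0 x (D.D0 y) + S.br0 y (D.D0 x) + a • D.D0 (D.D0 y)))

theorem semidirectBr1_semidirectBr0 (D : EvenDer K g0 g1 S) (p q : g0 × K) (f : g1) :
    D.semidirectBr1 (D.semidirectBr0 p q) f
      = D.semidirectBr1 p (D.semidirectBr1 q f) + D.semidirectBr1 q (D.semidirectBr1 p f) := by
  obtain ⟨x, a⟩ := p
  obtain ⟨y, b⟩ := q
  have two_eq_zero : (2 : K) = 0 := CharTwo.two_eq_zero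
  simp only [semidirectBr0_apply, semidirectBr1_apply, map_add, map_smul, D.der1, S.act_br,
    LinearMap.add_apply, LinearMap.smul_apply, zero_smul]
  linear_combination (norm := module) -two_eq_zero •
    (a • S.br1 y (D.D1 f) + b • S.br1 x (D.D1 f) + (a * b) • D.D1 (D.D1 f))

theorem semidirectBr0_jacobi_br11 (D : EvenDer K g0 g1 S) (p : g0 × K) (f g : g1) :
    D.semidirectBr0 p (S.br11 f g, 0) + (S.br11 f (D.semidirectBr1 p g), 0)
      + (S.br11 g (D.semidirectBr1 p f), 0) = 0 := by
  obtain ⟨x, ν⟩ := p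
  have two_eq_zero : (2 : K) = 0 := CharTwo.two_eq_zero
  simp only [semidirectBr0_apply, semidirectBr1_apply, map_add, map_smul, D.map_br11,
    Prod.mk_add_mk, Prod.mk_eq_zero, zero_smul, add_zero, and_true, S.br11_comm (D.D1 f) g]
  linear_combination (norm := module) S.jacobi_mix x f g + two_eq_zero •
    ν • (S.br11 g (D.D1 f) + S.br11 f (D.D1 g))

/-- The semidirect product `g ⋊ Ke` of a Lie superalgebra with an even element `e` acting by the
even derivation `D`; the even element `x + ν e` is encoded as `(x, ν)`. -/
def semidirect (D : EvenDer K g0 g1 S) : SuperAlg K (g0 × K) g1 where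
  br0 := D.semidirectBr0
  br1 := D.semidirectBr1
  br11 := S.br11.compr₂ (LinearMap.inl K g0 K)
  sq f := (S.sq f, 0)
  sq_smul c f := by simp [S.sq_smul]
  sq_add f g := by simp [S.sq_add]
  br0_self := D.semidirectBr0_self
  br11_comm f g := by simp [S.br11_comm f g]
  jacobi0 := D.semidirectBr0_jacobi
  act_br := D.semidirectBr1_semidirectBr0
  jacobi_mix := D.semidirectBr0_jacobi_br11
  sq_br0 := by
    rintro f ⟨x, ν⟩
    simp [S.sq_br0, D.der_sq, S.br11_comm (D.D1 f) f]
  sq_br1 f g := by simp [S.sq_br1]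

end CharTwo

end EvenDer

namespace SuperAlg

/-- An odd 2-cocycle of a Lie superalgebra with values in the trivial module `K`, used to extend it
by a central odd element. By oddness only its component `ω` on `g0 × g1` is nonzero; the cocycle
condition on three odd elements is stated through the squaring. -/
structure IsOddCocycle (S : SuperAlg K g0 g1) (ω : g0 →ₗ[K] g1 →ₗ[K] K) : Prop where
  map_br0 : ∀ x y f, ω (S.br0 x y) f = ω x (S.br1 y f) + ω y (S.br1 x f)
  map_sq : ∀ f g, ω (S.sq f) g = ω (S.br11 f g) f

/-- The even-odd bracket of the extension of `S` by a central odd element `x` with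
`[u, v] = ω(u, v) x + [u, v]_S`; the pair `(μ, v)` stands for `μ x + v`. -/
def centralExtBr1 (S : SuperAlg K g0 g1) (ω : g0 →ₗ[K] g1 →ₗ[K] K) :
    g0 →ₗ[K] K × g1 →ₗ[K] K × g1 :=
  LinearMap.mk₂ K (fun x p ↦ (ω x p.2, S.br1 x p.2))
    (by simp) (by simp) (by simp) (by simp)

/-- The extension of a Lie superalgebra by a central odd element `x` along the odd 2-cocycle `ω`;
the odd element `μ x + v` is encoded as `(μ, v)`. -/
def oddCentralExt (S : SuperAlg K g0 g1) (ω : g0 →ₗ[K] g1 →ₗ[K] K) (hω : S.IsOddCocycle ω) :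
    SuperAlg K g0 (K × g1) where
  br0 := S.br0
  br1 := S.centralExtBr1 ω
  br11 := S.br11.compl₁₂ (LinearMap.snd K K g1) (LinearMap.snd K K g1)
  sq p := S.sq p.2
  sq_smul c p := S.sq_smul c p.2
  sq_add p q := S.sq_add p.2 q.2
  br0_self := S.br0_self
  br11_comm p q := S.br11_comm p.2 q.2
  jacobi0 := S.jacobi0
  act_br x y p := Prod.ext (hω.map_br0 x y p.2) (S.act_br x y p.2)
  jacobi_mix x p q := S.jacobi_mix x p.2 q.2
  sq_br0 p x := S.sq_br0 p.2 x
  sq_br1 p q := Prod.ext (hω.map_sq p.2 q.2) (S.sq_br1 p.2 q.2)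

end SuperAlg

namespace OddNIS

/-- The form `(u + ν e, v) ↦ B(D u, v)` on the semidirect product `g ⋊ Ke`, a cocycle when `D` is
self-adjoint for `B`. -/
def derCocycle (No : OddNIS K g0 g1 S) (D : EvenDer K g0 g1 S) : g0 × K →ₗ[K] g1 →ₗ[K] K :=
  No.Bo ∘ₗ D.D0 ∘ₗ LinearMap.fst K g0 K

@[simp]
theorem derCocycle_apply (No : OddNIS K g0 g1 S) (D : EvenDer K g0 g1 S) (p : g0 × K) (f : g1) :
    No.derCocycle D p f = No.Bo (D.D0 p.1) f :=
  rfl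

/-- The orthogonal sum of the odd form `B` with the pairing of an odd element `x` with an even
element `e`; `(u, ν)` stands for `u + ν e` and `(μ, v)` for `μ x + v`. -/
def hyperbolicForm (No : OddNIS K g0 g1 S) : g0 × K →ₗ[K] K × g1 →ₗ[K] K :=
  No.Bo.compl₁₂ (LinearMap.fst K g0 K) (LinearMap.snd K K g1)
    + (LinearMap.mul K K).compl₁₂ (LinearMap.snd K g0 K) (LinearMap.fst K K g1)

@[simp]
theorem hyperbolicForm_apply (No : OddNIS K g0 g1 S) (p : g0 × K) (q : K × g1) :
    No.hyperbolicForm p q = No.Bo p.1 q.2 + p.2 * q.1 :=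
  rfl

theorem hyperbolicForm_separatingLeft (No : OddNIS K g0 g1 S) :
    No.hyperbolicForm.SeparatingLeft := fun p hp ↦
  Prod.ext (No.nondeg0 p.1 fun f ↦ by simpa using hp (0, f)) (by simpa using hp (1, 0))

theorem hyperbolicForm_separatingRight (No : OddNIS K g0 g1 S) :
    No.hyperbolicForm.SeparatingRight := fun q hq ↦
  Prod.ext (by simpa using hq (0, 1)) (No.nondeg1 q.2 fun x ↦ by simpa using hq (x, 0))

end OddNIS

namespace DevDataOdd

variable [CharP K 2] {No : OddNIS K g0 g1 S} {D : EvenDer K g0 g1 S}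

theorem Bo_D0_eq_Bo_D1 (h : DevDataOdd K g0 g1 S No D) (x : g0) (f : g1) :
    No.Bo (D.D0 x) f = No.Bo x (D.D1 f) :=
  CharTwo.add_eq_zero.mp (h x f)

theorem derCocycle_semidirectBr0 (h : DevDataOdd K g0 g1 S No D) (p q : g0 × K) (f : g1) :
    No.derCocycle D (D.semidirectBr0 p q) f
      = No.derCocycle D p (D.semidirectBr1 q f) + No.derCocycle D q (D.semidirectBr1 p f) := by
  obtain ⟨x, a⟩ := p
  obtain ⟨y, b⟩ := q
  have br_left : No.Bo (S.br0 (D.D0 x) y) f = No.Bo (D.D0 x) (S.br1 y f) := No.inv0 _ _ _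
  have br_right : No.Bo (S.br0 x (D.D0 y)) f = No.Bo (D.D0 y) (S.br1 x f) := by
    rw [No.inv0, No.inv1]
  simp only [OddNIS.derCocycle_apply, EvenDer.semidirectBr0_apply, EvenDer.semidirectBr1_apply,
    map_add, map_smul, LinearMap.add_apply, LinearMap.smul_apply, D.der0, br_left, br_right,
    h.Bo_D0_eq_Bo_D1 (D.D0 _)]
  module

theorem Bo_D0_sq (h : DevDataOdd K g0 g1 S No D) (f g : g1) :
    No.Bo (D.D0 (S.sq f)) g = No.Bo (D.D0 (S.br11 f g)) f :=
  calc No.Bo (D.D0 (S.sq f)) g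
      = No.Bo (S.br11 (D.D1 f) f) g := by rw [D.der_sq]
    _ = No.Bo (S.br11 f g) (D.D1 f) := No.inv2 _ _ _
    _ = No.Bo (D.D0 (S.br11 f g)) f := (h.Bo_D0_eq_Bo_D1 _ _).symm

theorem isOddCocycle_derCocycle (h : DevDataOdd K g0 g1 S No D) :
    D.semidirect.IsOddCocycle (No.derCocycle D) where
  map_br0 := h.derCocycle_semidirectBr0
  map_sq := h.Bo_D0_sq

/-- The `D_ev`-extension `Kx ⊕ a ⊕ Ke` of a Lie superalgebra `a` with an odd form, as a central
extension of the semidirect product `a ⋊ Ke`. -/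
def extension (h : DevDataOdd K g0 g1 S No D) : SuperAlg K (g0 × K) (K × g1) :=
  D.semidirect.oddCentralExt (No.derCocycle D) h.isOddCocycle_derCocycle

@[simp]
theorem extension_br0 (h : DevDataOdd K g0 g1 S No D) : h.extension.br0 = D.semidirectBr0 :=
  rfl

@[simp]
theorem extension_br1 (h : DevDataOdd K g0 g1 S No D) (x : g0) (ν μ : K) (v : g1) :
    h.extension.br1 (x, ν) (μ, v) = (No.Bo (D.D0 x) v, S.br1 x v + ν • D.D1 v) :=
  rfl

@[simp]
theorem extension_br11 (h : DevDataOdd K g0 g1 S No D) (p q : K × g1) :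
    h.extension.br11 p q = (S.br11 p.2 q.2, 0) :=
  rfl

theorem hyperbolicForm_br0 (h : DevDataOdd K g0 g1 S No D) (p q : g0 × K) (r : K × g1) :
    No.hyperbolicForm (h.extension.br0 p q) r = No.hyperbolicForm p (h.extension.br1 q r) := by
  obtain ⟨x, a⟩ := p
  obtain ⟨y, b⟩ := q
  obtain ⟨μ, f⟩ := r
  simp only [extension_br0, extension_br1, EvenDer.semidirectBr0_apply,
    OddNIS.hyperbolicForm_apply, map_add, map_smul, LinearMap.add_apply, LinearMap.smul_apply,
    smul_eq_mul, No.inv0, h.Bo_D0_eq_Bo_D1]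
  ring

theorem hyperbolicForm_br1_comm (h : DevDataOdd K g0 g1 S No D) (p q : g0 × K) (r : K × g1) :
    No.hyperbolicForm q (h.extension.br1 p r) = No.hyperbolicForm p (h.extension.br1 q r) := by
  obtain ⟨x, a⟩ := p
  obtain ⟨y, b⟩ := q
  obtain ⟨μ, f⟩ := r
  simp only [extension_br1, OddNIS.hyperbolicForm_apply, map_add, map_smul, smul_eq_mul,
    No.inv1 x y, h.Bo_D0_eq_Bo_D1]
  ring

theorem hyperbolicForm_br11 (h : DevDataOdd K g0 g1 S No D) (p q r : K × g1) :
    No.hyperbolicForm (h.extension.br11 p q) r = No.hyperbolicForm (h.extension.br11 q r) p := by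
  simp [No.inv2 p.2 q.2 r.2]

/-- The odd form on the `D_ev`-extension extending the given one by `B(x, e) = 1`. -/
def extensionNIS (h : DevDataOdd K g0 g1 S No D) :
    OddNIS K (g0 × K) (K × g1) h.extension where
  Bo := No.hyperbolicForm
  nondeg0 := No.hyperbolicForm_separatingLeft
  nondeg1 := No.hyperbolicForm_separatingRight
  inv0 := h.hyperbolicForm_br0
  inv1 := h.hyperbolicForm_br1_comm
  inv2 := h.hyperbolicForm_br11

end DevDataOdd

end Extension

theorem stmt12_general (K : Type) [Field K] [CharP K 2] (a0 a1 : Type)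
    [AddCommGroup a0] [Module K a0] [AddCommGroup a1] [Module K a1]
    (S : SuperAlg K a0 a1) (No : OddNIS K a0 a1 S) (D : EvenDer K a0 a1 S)
    (hdata : DevDataOdd K a0 a1 S No D) :
    ∃ (T : SuperAlg K (a0 × K) (K × a1)) (M : OddNIS K (a0 × K) (K × a1) T),
      DevExtOddFormulas K a0 a1 S No D T M :=
  ⟨hdata.extension, hdata.extensionNIS,
    fun _ _ _ _ ↦ rfl, fun _ _ _ _ ↦ rfl, fun _ _ ↦ rfl, fun _ _ _ _ ↦ rfl⟩

/-- Theorem 4.4 of the paper: the `D_ev`-extension of a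
NIS-Lie superalgebra `(a, B_a)` in characteristic 2 with `B_a` odd, by means of
an even derivation `D` with `B_a(Du,v) + B_a(u,Dv) = 0`, is again a NIS-Lie
superalgebra with an odd form: there is a Lie superalgebra structure on
`g = Kx ⊕ a ⊕ Ke` (`x` odd, `e` even) with the prescribed squaring, bracket and
odd bilinear form. -/
theorem stmt12 (K : Type) [Field K] [CharP K 2] (a0 a1 : Type)
    [AddCommGroup a0] [Module K a0] [AddCommGroup a1] [Module K a1]
    [FiniteDimensional K a0] [FiniteDimensional K a1]
    (S : SuperAlg K a0 a1) (No : OddNIS K a0 a1 S)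
    (D : EvenDer K a0 a1 S)
    (hdata : DevDataOdd K a0 a1 S No D) :
    ∃ (T : SuperAlg K (a0 × K) (K × a1)) (M : OddNIS K (a0 × K) (K × a1) T),
      DevExtOddFormulas K a0 a1 S No D T M :=
  stmt12_general K a0 a1 S No D hdata

end Char2DoubleExt
end
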